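/- arXiv:2205.02740 — 3 statements merged into one kernel-verified Lean document; each statement's English description precedes it below -/
import Mathlib

section
/- Let T_L be the left shift operator on ℓ², defined by (T_L x)_n = x_{n+1}, and let I be the identity operator on ℓ². Then I + T_L is a P-operator relative to the standard orthonormal basis of ℓ²: for every x ∈ ℓ², if x_n·((I + T_L) x)_n ≤ 0 for all n, then x = 0. -/
open Filter Topology
open scoped ENNReal RealInnerProductSpace

theorem tendsto_norm_cofinite_zero_of_memℓp {ι : Type*} {E : ι → Type*}
    [∀ i, NormedAddCommGroup (E i)] {p : ℝ≥0∞} (hp : p ≠ ∞) {f : ∀ i, E i} (hf : Memℓp f p) :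
    Tendsto (fun i ↦ ‖f i‖) cofinite (𝓝 0) := by
  rcases eq_or_ne p 0 with rfl | hp_zero
  · have eventually_zero : ∀ᶠ i in cofinite, f i = 0 := hf.finite_dsupport
    exact tendsto_const_nhds.congr' (eventually_zero.mono fun i hi ↦ (norm_eq_zero.2 hi).symm)
  · have toReal_pos : 0 < p.toReal := ENNReal.toReal_pos hp_zero hp
    have tendsto_root := (hf.summable toReal_pos).tendsto_cofinite_zero.rpow_const
      (.inr (inv_nonneg.2 toReal_pos.le))
    simpa only [Real.rpow_rpow_inv (norm_nonneg _) toReal_pos.ne',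
      Real.zero_rpow (inv_ne_zero toReal_pos.ne')] using tendsto_root

theorem tendsto_atTop_zero_of_memℓp {E : Type*} [NormedAddCommGroup E] {p : ℝ≥0∞} (hp : p ≠ ∞)
    {x : ℕ → E} (hx : Memℓp x p) : Tendsto x atTop (𝓝 0) := by
  rw [← Nat.cofinite_eq_atTop, tendsto_zero_iff_norm_tendsto_zero]
  exact tendsto_norm_cofinite_zero_of_memℓp hp hx

theorem eq_zero_of_monotone_norm_of_tendsto_zero {ι E : Type*} [Preorder ι] [IsDirectedOrder ι]
    [NormedAddCommGroup E] {x : ι → E} (hmono : Monotone fun i ↦ ‖x i‖)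
    (hlim : Tendsto x atTop (𝓝 0)) : x = 0 :=
  funext fun i ↦ norm_le_zero_iff.1 <|
    hmono.ge_of_tendsto (tendsto_zero_iff_norm_tendsto_zero.1 hlim) i

section InnerProductSpace

variable {E : Type*} [NormedAddCommGroup E] [InnerProductSpace ℝ E]

theorem norm_le_norm_of_inner_self_add_nonpos {x y : E} (h : ⟪x, x + y⟫ ≤ 0) : ‖x‖ ≤ ‖y‖ := by
  rcases eq_or_ne x 0 with rfl | hx
  · simp only [norm_zero, norm_nonneg]
  · refine le_of_mul_le_mul_left ?_ (norm_pos_iff.2 hx)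
    calc ‖x‖ * ‖x‖ = ⟪x, x⟫ := (real_inner_self_eq_norm_mul_norm x).symm
      _ ≤ -⟪x, y⟫ := by rw [inner_add_right] at h; linarith
      _ ≤ |⟪x, y⟫| := neg_le_abs _
      _ ≤ ‖x‖ * ‖y‖ := abs_real_inner_le_norm x y

theorem id_add_leftShift_pOperator_general {x : ℕ → E} (hlim : Tendsto x atTop (𝓝 0))
    (hx : ∀ n, ⟪x n, x n + x (n + 1)⟫ ≤ 0) : x = 0 :=
  eq_zero_of_monotone_norm_of_tendsto_zero
    (monotone_nat_of_le_succ fun n ↦ norm_le_norm_of_inner_self_add_nonpos (hx n)) hlim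

end InnerProductSpace

/-- `I + T_L` is a P-operator on `ℓ²` relative to the standard orthonormal basis, where
`T_L` is the left shift operator. -/
theorem id_add_leftShift_pOperator
    (T : lp (fun _ : ℕ => ℝ) 2 →L[ℝ] lp (fun _ : ℕ => ℝ) 2)
    (hT : ∀ (x : lp (fun _ : ℕ => ℝ) 2) (n : ℕ), T x n = x (n + 1)) :
    ∀ x : lp (fun _ : ℕ => ℝ) 2,
      (∀ n : ℕ, x n * (ContinuousLinearMap.id ℝ (lp (fun _ : ℕ => ℝ) 2) + T) x n ≤ 0) →
      x = 0 := by
  exact fun x hx ↦ lp.ext <| id_add_leftShift_pOperator_general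
    (tendsto_atTop_zero_of_memℓp ENNReal.ofNat_ne_top (lp.memℓp x))
    fun n ↦ by simpa [hT, mul_comm] using hx n
end

section
/- Let T be the bounded linear operator on ℓ² defined by (T x)_0 = x_0 and (T x)_{n+1} = 2 x_n + x_{n+1}, and let U be the unitary operator on ℓ² acting on each consecutive pair of coordinates by (U x)_{2k} = (x_{2k} + x_{2k+1})/√2 and (U x)_{2k+1} = (x_{2k} − x_{2k+1})/√2. Then T is not a P-operator relative to the orthonormal basis {U e_n}: there exists a nonzero x ∈ ℓ² (e.g., x = (1, −1, 0, 0, …)) such that ⟨x, U e_n⟩·⟨T x, U e_n⟩ ≤ 0 for all n. -/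
local notation "⟪" x ", " y "⟫" => @inner ℝ _ _ x y

/-!
Diagonal entries `⟪T (f i), f i⟫` of a P-operator relative to an orthonormal family `f` are
positive, as one sees by testing the definition on `x = f i`. Here `U e₁ = (e₀ - e₁) / √2`, and `T`
sends `e₀ - e₁` to `e₀ + e₁ - 2 e₂`, which is orthogonal to it: the diagonal entry of `T` at `U e₁`
vanishes.
-/

local notation "ℓ²" => lp (fun _ : ℕ => ℝ) 2

section POperator

variable {ι E : Type*} [NormedAddCommGroup E] [InnerProductSpace ℝ E] {f : ι → E} {T : E → E}

/-- `T` is a P-operator relative to the family `f`: only `x = 0` has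
`⟪x, f i⟫ * ⟪T x, f i⟫ ≤ 0` for every `i`. Here `T` may be any map and `f` any family. -/
def IsPOperator (f : ι → E) (T : E → E) : Prop :=
  ∀ x, (∀ i, ⟪x, f i⟫ * ⟪T x, f i⟫ ≤ 0) → x = 0

theorem not_isPOperator_iff :
    ¬IsPOperator f T ↔ ∃ x, x ≠ 0 ∧ ∀ i, ⟪x, f i⟫ * ⟪T x, f i⟫ ≤ 0 := by
  simp only [IsPOperator, not_forall, exists_prop, and_comm, ne_eq]

theorem IsPOperator.inner_apply_self_pos (hT : IsPOperator f T) (hf : Orthonormal ℝ f) (i : ι) :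
    0 < ⟪T (f i), f i⟫ := by
  by_contra! hnonpos
  refine hf.ne_zero i (hT (f i) fun j => ?_)
  obtain rfl | hij := eq_or_ne i j
  · exact mul_nonpos_of_nonneg_of_nonpos real_inner_self_nonneg hnonpos
  · rw [hf.inner_eq_zero hij, zero_mul]

end POperator

section Orthonormal

variable {ι 𝕜 H : Type*} [RCLike 𝕜]

theorem orthonormal_lp_single [DecidableEq ι] :
    Orthonormal 𝕜 fun i : ι => (lp.single 2 i 1 : lp (fun _ : ι => 𝕜) 2) := by
  simp [orthonormal_iff_ite, lp.inner_single_left, Pi.single_apply]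

theorem orthonormal_comp_of_mem_unitary [NormedAddCommGroup H] [InnerProductSpace 𝕜 H]
    [CompleteSpace H] {v : ι → H} (hv : Orthonormal 𝕜 v) {U : H →L[𝕜] H}
    (hU : U ∈ unitary (H →L[𝕜] H)) : Orthonormal 𝕜 fun i => U (v i) :=
  hv.comp_linearIsometryEquiv (Unitary.linearIsometryEquiv ⟨U, hU⟩)

end Orthonormal

theorem pairwise_hadamard_single_odd {U : ℓ² → ℓ²}
    (hU_even : ∀ (x : ℓ²) (k : ℕ), U x (2 * k) = (x (2 * k) + x (2 * k + 1)) / √2)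
    (hU_odd : ∀ (x : ℓ²) (k : ℕ), U x (2 * k + 1) = (x (2 * k) - x (2 * k + 1)) / √2) (k : ℕ) :
    U (lp.single 2 (2 * k + 1) 1) =
      (√2)⁻¹ • (lp.single 2 (2 * k) 1 - lp.single 2 (2 * k + 1) 1 : ℓ²) := by
  ext m
  rw [lp.coeFn_smul, Pi.smul_apply]
  obtain ⟨j, rfl | rfl⟩ := Nat.even_or_odd' m
  · have hne : 2 * j ≠ 2 * k + 1 := by lia
    simp [hU_even, Pi.single_apply, hne, div_eq_inv_mul]
  · have hne : 2 * j ≠ 2 * k + 1 := by lia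
    have hne' : 2 * j + 1 ≠ 2 * k := by lia
    simp [hU_odd, Pi.single_apply, hne, hne', div_eq_inv_mul]

theorem inner_lower_bidiagonal_single_sub_single {T : ℓ² → ℓ²} {c : ℝ}
    (hT_zero : ∀ x : ℓ², T x 0 = x 0)
    (hT_succ : ∀ (x : ℓ²) (n : ℕ), T x (n + 1) = c * x n + x (n + 1)) (n : ℕ) :
    ⟪T (lp.single 2 n 1 - lp.single 2 (n + 1) 1),
      (lp.single 2 n 1 - lp.single 2 (n + 1) 1 : ℓ²)⟫ = 2 - c := by
  set x : ℓ² := lp.single 2 n 1 - lp.single 2 (n + 1) 1 with hx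
  have hxn : x n = 1 := by simp [hx]
  have hxn_succ : x (n + 1) = -1 := by simp [hx]
  have hTxn : T x n = 1 := by
    cases n with
    | zero => rw [hT_zero, hxn]
    | succ m =>
      have hxm : x m = 0 := by simp [hx, (by lia : m ≠ m + 1 + 1)]
      rw [hT_succ, hxm, hxn, mul_zero, zero_add]
  calc ⟪T x, x⟫ = T x n - T x (n + 1) := by
        rw [hx, inner_sub_right]; simp [lp.inner_single_right]
    _ = 1 - (c * 1 + -1) := by rw [hTxn, hT_succ, hxn, hxn_succ]
    _ = 2 - c := by ring

/-- The operator `T` on `ℓ²` given by `(Tx)_0 = x_0`, `(Tx)_{n+1} = 2 x_n + x_{n+1}` is not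
a P-operator relative to the orthonormal basis `{U e_n}`, where `U` is the unitary operator
acting as a Hadamard rotation on each consecutive pair of coordinates and `{e_n}` is the
standard orthonormal basis. -/
theorem lower_bidiagonal_not_pOperator_rotated_basis
    (T U : lp (fun _ : ℕ => ℝ) 2 →L[ℝ] lp (fun _ : ℕ => ℝ) 2)
    (hT0 : ∀ x : lp (fun _ : ℕ => ℝ) 2, T x 0 = x 0)
    (hT : ∀ (x : lp (fun _ : ℕ => ℝ) 2) (n : ℕ), T x (n + 1) = 2 * x n + x (n + 1))
    (hUunitary : U ∈ unitary (lp (fun _ : ℕ => ℝ) 2 →L[ℝ] lp (fun _ : ℕ => ℝ) 2))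
    (hU0 : ∀ (x : lp (fun _ : ℕ => ℝ) 2) (k : ℕ),
      U x (2 * k) = (x (2 * k) + x (2 * k + 1)) / Real.sqrt 2)
    (hU1 : ∀ (x : lp (fun _ : ℕ => ℝ) 2) (k : ℕ),
      U x (2 * k + 1) = (x (2 * k) - x (2 * k + 1)) / Real.sqrt 2) :
    ∃ x : lp (fun _ : ℕ => ℝ) 2, x ≠ 0 ∧ ∀ n : ℕ,
      ⟪x, U (lp.single 2 n (1 : ℝ))⟫ * ⟪T x, U (lp.single 2 n (1 : ℝ))⟫ ≤ 0 := by
  have hf : Orthonormal ℝ fun n => U (lp.single 2 n (1 : ℝ)) :=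
    orthonormal_comp_of_mem_unitary orthonormal_lp_single hUunitary
  have hUe₁ : U (lp.single 2 1 1) = (√2)⁻¹ • (lp.single 2 0 1 - lp.single 2 1 1 : ℓ²) :=
    pairwise_hadamard_single_odd hU0 hU1 0
  have hdiag : ⟪T (U (lp.single 2 1 1)), U (lp.single 2 1 1)⟫ = 0 := by
    rw [hUe₁, map_smul, real_inner_smul_left, real_inner_smul_right,
      inner_lower_bidiagonal_single_sub_single hT0 hT 0, sub_self, mul_zero, mul_zero]
  exact not_isPOperator_iff.mp fun hP => (hP.inner_apply_self_pos hf 1).ne' hdiag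
end

section
/- Let T be the bounded linear operator on ℓ² defined by (T x)_n = x_n/(n+1). Then T is a P-operator relative to the standard orthonormal basis of ℓ², but T is not invertible (it does not admit a bounded linear inverse; in particular T is not surjective). -/
open scoped ENNReal

theorem memℓp_inv_natCast_add_one {p : ℝ≥0∞} (hp : 1 < p) :
    Memℓp (fun n : ℕ => ((n : ℝ) + 1)⁻¹) p := by
  obtain ⟨q, one_lt_q, q_lt_p⟩ := ENNReal.lt_iff_exists_nnreal_btwn.mp hp
  have summable_rpow : Summable fun n : ℕ => 1 / |(n : ℝ) + 1| ^ (q : ℝ) :=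
    (Real.summable_one_div_nat_add_rpow 1 q).mpr (by exact_mod_cast one_lt_q)
  have mem_q : Memℓp (fun n : ℕ => ((n : ℝ) + 1)⁻¹) q :=
    memℓp_gen <| summable_rpow.congr fun n => by
      rw [norm_inv, Real.norm_eq_abs, Real.inv_rpow (abs_nonneg _), one_div, ENNReal.coe_toReal]
  exact mem_q.of_exponent_ge q_lt_p.le

theorem not_memℓp_const {ι E : Type*} [Infinite ι] [NormedAddCommGroup E] {p : ℝ≥0∞}
    (hp : p ≠ ∞) {c : E} (hc : c ≠ 0) : ¬ Memℓp (fun _ : ι => c) p := by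
  intro mem_p
  -- Raising the exponent to `max p 1` covers `p = 0`, where `Memℓp` means finite support.
  have exponent_pos : 0 < (max p 1).toReal :=
    ENNReal.toReal_pos (by simp) (max_ne_top hp ENNReal.one_ne_top)
  have summable_const : Summable fun _ : ι => ‖c‖ ^ (max p 1).toReal :=
    (mem_p.of_exponent_ge (le_max_left p 1)).summable exponent_pos
  exact (Real.rpow_pos_of_pos (norm_pos_iff.mpr hc) _).ne'
    ((summable_const_iff _).mp summable_const)

-- The sequence `a` itself is not attained: its preimage would be the constant sequence `1`.
theorem not_surjective_of_diagonal_memℓp {ι 𝕜 : Type*} [Infinite ι] [NormedDivisionRing 𝕜]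
    {p : ℝ≥0∞} (hp : p ≠ ∞) {a : ι → 𝕜} (ha : ∀ i, a i ≠ 0) (mem_a : Memℓp a p)
    {T : lp (fun _ : ι => 𝕜) p → lp (fun _ : ι => 𝕜) p} (hT : ∀ x i, T x i = a i * x i) :
    ¬ Function.Surjective T := by
  intro surj
  obtain ⟨x, hx⟩ := surj ⟨a, mem_a⟩
  have x_eq_one : (x : ι → 𝕜) = fun _ => 1 := by
    funext i
    have mul_eq : a i * x i = a i := by rw [← hT, hx]
    exact (mul_eq_left₀ (ha i)).mp mul_eq
  exact not_memℓp_const hp one_ne_zero (x_eq_one ▸ lp.memℓp x)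

theorem eq_zero_of_forall_mul_diagonal_nonpos {ι : Type*} {p : ℝ≥0∞} {a : ι → ℝ}
    (ha : ∀ i, 0 < a i) {T : lp (fun _ : ι => ℝ) p → lp (fun _ : ι => ℝ) p}
    (hT : ∀ x i, T x i = a i * x i) {x : lp (fun _ : ι => ℝ) p} (hx : ∀ i, x i * T x i ≤ 0) :
    x = 0 := by
  ext i
  have mul_sq_nonpos : a i * (x i * x i) ≤ 0 := by
    rw [mul_left_comm, ← hT]
    exact hx i
  exact mul_self_eq_zero.mp
    ((nonpos_of_mul_nonpos_right mul_sq_nonpos (ha i)).antisymm (mul_self_nonneg _))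

/-- The operator `T` on `ℓ²` given by `(Tx)_n = x_n / (n+1)` is a P-operator relative to
the standard orthonormal basis, but it is not invertible: it has no bounded linear inverse,
and in particular it is not surjective. -/
theorem diagonal_reciprocal_pOperator_not_invertible
    (T : lp (fun _ : ℕ => ℝ) 2 →L[ℝ] lp (fun _ : ℕ => ℝ) 2)
    (hT : ∀ (x : lp (fun _ : ℕ => ℝ) 2) (n : ℕ), T x n = x n / ((n : ℝ) + 1)) :
    (∀ x : lp (fun _ : ℕ => ℝ) 2, (∀ n : ℕ, x n * T x n ≤ 0) → x = 0) ∧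
    (¬ ∃ S : lp (fun _ : ℕ => ℝ) 2 →L[ℝ] lp (fun _ : ℕ => ℝ) 2,
        S ∘L T = ContinuousLinearMap.id ℝ (lp (fun _ : ℕ => ℝ) 2) ∧
        T ∘L S = ContinuousLinearMap.id ℝ (lp (fun _ : ℕ => ℝ) 2)) ∧
    ¬ Function.Surjective T := by
  have weight_pos (n : ℕ) : 0 < ((n : ℝ) + 1)⁻¹ := by positivity
  have diagonal (x : lp (fun _ : ℕ => ℝ) 2) (n : ℕ) : T x n = ((n : ℝ) + 1)⁻¹ * x n := by
    rw [hT, div_eq_inv_mul]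
  have not_surj : ¬ Function.Surjective T :=
    not_surjective_of_diagonal_memℓp ENNReal.ofNat_ne_top (fun n => (weight_pos n).ne')
      (memℓp_inv_natCast_add_one ENNReal.one_lt_two) diagonal
  refine ⟨fun x => eq_zero_of_forall_mul_diagonal_nonpos weight_pos diagonal, ?_, not_surj⟩
  rintro ⟨S, -, right_inverse⟩
  exact not_surj fun y => ⟨S y, DFunLike.congr_fun right_inverse y⟩
end
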